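/- Let (T, Λ) be a cookie cutter system and write φ = −log|T'|. Then there exist constants A, B > 0 such that for every n ≥ 1, every n-th level basic set I_n^i, and every x ∈ I_n^i: A·e^{φⁿ(x)} ≤ |I_n^i| ≤ B·e^{φⁿ(x)}, where φⁿ(x) = Σ_{j=0}^{n-1} φ(T^j(x)) and |I_n^i| is the length of the interval I_n^i. -/

import Mathlib

/-!
The proof is the classical bounded distortion argument.

A basic set of level `n` is an interval with endpoints `a`, `b` such that `T^n a = 0` and
`T^n b = 1`, and any two of its points follow the same branches of `T` for `n` steps
(`CookieCutter.exists_component_eq_uIcc`).  Points `y`, `z` with a common itinerary of length `n`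
satisfy `λ ^ n * |y - z| ≤ |T^n y - T^n z|`, by the mean value theorem
(`CookieCutter.SameItin.expand`).

Applying the mean value theorem at each of the `n` steps writes
`1 = |T^n a - T^n b|` as `|a - b|` times a product of factors `|T' ξ_m|`, where `ξ_m` lies in the
same branch as `T^m x` at distance at most `2 λ ^ (-(n - m))`.  Since `log |T'|` is Hölder, replacing
each `ξ_m` by `T^m x` changes the logarithm of the product by at most the sum of a geometric series,
which is bounded independently of `n`.  Hence `log |a - b|` is within a constant of
`φⁿ(x)` (`CookieCutter.distortion`), which is the claim after exponentiating.
-/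

open MeasureTheory Set

/-- A cookie cutter system: `k ≥ 2` pairwise disjoint closed intervals
`[u j, v j] ⊆ [0,1]`, each mapped bijectively onto `[0,1]` by `T`, with
`T` differentiable with `ε`-Hölder derivative `T'` satisfying `|T'| ≥ lam > 1`. -/
structure CookieCutter where
  k : ℕ
  two_le_k : 2 ≤ k
  u : Fin k → ℝ
  v : Fin k → ℝ
  T : ℝ → ℝ
  T' : ℝ → ℝ
  lam : ℝ
  eps : ℝ
  Ceps : ℝ
  nondeg : ∀ j, u j < v j
  subset_unit : ∀ j, Icc (u j) (v j) ⊆ Icc (0:ℝ) 1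
  pair_disj : Pairwise fun i j => Disjoint (Icc (u i) (v i)) (Icc (u j) (v j))
  bijOn : ∀ j, BijOn T (Icc (u j) (v j)) (Icc (0:ℝ) 1)
  hasDeriv : ∀ x ∈ ⋃ j, Icc (u j) (v j),
    HasDerivWithinAt T (T' x) (⋃ j, Icc (u j) (v j)) x
  eps_pos : 0 < eps
  Ceps_nonneg : 0 ≤ Ceps
  holder : ∀ x ∈ ⋃ j, Icc (u j) (v j), ∀ y ∈ ⋃ j, Icc (u j) (v j),
    |T' x - T' y| ≤ Ceps * |x - y| ^ eps
  one_lt_lam : 1 < lam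
  expanding : ∀ x ∈ ⋃ j, Icc (u j) (v j), lam ≤ |T' x|

/-- The length of a (bounded) interval `I ⊆ ℝ`. -/
noncomputable def setLen (I : Set ℝ) : ℝ := sSup I - sInf I

namespace CookieCutter

variable (S : CookieCutter)

/-- The domain `I_1 ∪ ⋯ ∪ I_k` of the cookie cutter map. -/
def domain : Set ℝ := ⋃ j, Icc (S.u j) (S.v j)

/-- The set `T^{-n}([0,1])`: points whose first `n` iterates stay in the domain. -/
def level (n : ℕ) : Set ℝ := {x | ∀ m < n, S.T^[m] x ∈ S.domain}

/-- `I` is an `n`-th level basic set, i.e. a connected component of `T^{-n}([0,1])`. -/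
def IsBasic (n : ℕ) (I : Set ℝ) : Prop :=
  ∃ x ∈ S.level n, I = connectedComponentIn (S.level n) x

/-- The repeller `Λ = ⋂_{n ≥ 0} T^{-n}([0,1])`. -/
def repeller : Set ℝ := {x | ∀ n, S.T^[n] x ∈ S.domain}

/-- The function `φ = - log |T'|`. -/
noncomputable def phi (x : ℝ) : ℝ := - Real.log |S.T' x|

/-- The Birkhoff sum `fⁿ(x) = Σ_{j<n} f(T^j x)`. -/
noncomputable def birkhoff (f : ℝ → ℝ) (n : ℕ) (x : ℝ) : ℝ :=
  ∑ j ∈ Finset.range n, f (S.T^[j] x)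

/-- `f` is Hölder continuous on the set `A`. -/
def IsHolderOn (f : ℝ → ℝ) (A : Set ℝ) : Prop :=
  ∃ β C : ℝ, 0 < β ∧ β ≤ 1 ∧ 0 ≤ C ∧ ∀ x ∈ A, ∀ y ∈ A, |f x - f y| ≤ C * |x - y| ^ β

/-- `μ` is a normalized Gibbs measure for the potential `ψ`: a Borel probability
measure on the repeller with `C ≤ μ(I_n^i)/e^{ψⁿ(x)} ≤ D` for every basic set. -/
def IsGibbs (ψ : ℝ → ℝ) (μ : Measure ℝ) : Prop :=
  IsProbabilityMeasure μ ∧ μ S.repellerᶜ = 0 ∧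
    ∃ C D : ℝ, 0 < C ∧ 0 < D ∧
      ∀ n, 1 ≤ n → ∀ I, S.IsBasic n I → ∀ x ∈ I ∩ S.repeller,
        C * Real.exp (S.birkhoff ψ n x) ≤ (μ I).toReal ∧
          (μ I).toReal ≤ D * Real.exp (S.birkhoff ψ n x)

/-- `ν` is a `T`-invariant Borel probability measure on the repeller. -/
def IsInvariantProb (ν : Measure ℝ) : Prop :=
  IsProbabilityMeasure ν ∧ ν S.repellerᶜ = 0 ∧
    ∀ A, MeasurableSet A → ν (S.T ⁻¹' A) = ν A

end CookieCutter

namespace CookieCutter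

variable (S : CookieCutter)

/-- The points `y` and `z` visit the same branch intervals of `T` at the times `0, …, n - 1`. -/
def SameItin (n : ℕ) (y z : ℝ) : Prop :=
  ∀ m < n, ∃ j, S.T^[m] y ∈ Icc (S.u j) (S.v j) ∧ S.T^[m] z ∈ Icc (S.u j) (S.v j)

variable {S}

lemma SameItin.tail {n : ℕ} {y z : ℝ} (h : S.SameItin (n + 1) y z) :
    S.SameItin n (S.T y) (S.T z) := fun m hm => by
  simpa only [Function.iterate_succ_apply] using h (m + 1) (by omega)

lemma SameItin.cons {n : ℕ} {y z : ℝ} {j : Fin S.k} (hy : y ∈ Icc (S.u j) (S.v j))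
    (hz : z ∈ Icc (S.u j) (S.v j)) (h : S.SameItin n (S.T y) (S.T z)) :
    S.SameItin (n + 1) y z := by
  intro m hm
  cases m with
  | zero => exact ⟨j, hy, hz⟩
  | succ m => simpa only [Function.iterate_succ_apply] using h m (by omega)

lemma mem_iUnion_of_mem {j : Fin S.k} {x : ℝ} (hx : x ∈ Icc (S.u j) (S.v j)) :
    x ∈ ⋃ j, Icc (S.u j) (S.v j) := mem_iUnion.2 ⟨j, hx⟩

lemma continuousOn_branch (j : Fin S.k) : ContinuousOn S.T (Icc (S.u j) (S.v j)) :=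
  fun x hx => ((S.hasDeriv x (mem_iUnion_of_mem hx)).continuousWithinAt).mono
    (subset_iUnion (fun j => Icc (S.u j) (S.v j)) j)

/-! ### Expansion -/

/-- The mean value theorem on a branch. -/
lemma mvt_branch {j : Fin S.k} {a b : ℝ} (ha : a ∈ Icc (S.u j) (S.v j))
    (hb : b ∈ Icc (S.u j) (S.v j)) (hab : a ≠ b) :
    ∃ ξ ∈ Icc (S.u j) (S.v j), |S.T a - S.T b| = |S.T' ξ| * |a - b| ∧ |ξ - a| ≤ |a - b| := by
  have key : ∀ c d : ℝ, c ∈ Icc (S.u j) (S.v j) → d ∈ Icc (S.u j) (S.v j) → c < d →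
      ∃ ξ ∈ Ioo c d, S.T' ξ * (d - c) = S.T d - S.T c := by
    intro c d hc hd hcd
    have hsub : Icc c d ⊆ Icc (S.u j) (S.v j) := Icc_subset_Icc hc.1 hd.2
    obtain ⟨ξ, hξ, h⟩ := exists_hasDerivAt_eq_slope S.T S.T' hcd
      ((continuousOn_branch j).mono hsub) (fun x hx =>
        ((S.hasDeriv x (mem_iUnion_of_mem (hsub (Ioo_subset_Icc_self hx)))).mono
          (hsub.trans (subset_iUnion (fun j => Icc (S.u j) (S.v j)) j))).hasDerivAt
            (Icc_mem_nhds hx.1 hx.2))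
    refine ⟨ξ, hξ, ?_⟩
    rw [h, div_mul_cancel₀ _ (sub_pos.2 hcd).ne']
  rcases lt_or_gt_of_ne hab with h | h
  · obtain ⟨ξ, hξ, e⟩ := key a b ha hb h
    refine ⟨ξ, ⟨ha.1.trans hξ.1.le, hξ.2.le.trans hb.2⟩, ?_, ?_⟩
    · rw [abs_sub_comm, ← e, abs_mul, abs_sub_comm a b]
    · rw [abs_of_pos (sub_pos.2 hξ.1), abs_sub_comm, abs_of_pos (sub_pos.2 h)]
      linarith [hξ.2]
  · obtain ⟨ξ, hξ, e⟩ := key b a hb ha h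
    refine ⟨ξ, ⟨hb.1.trans hξ.1.le, hξ.2.le.trans ha.2⟩, ?_, ?_⟩
    · rw [← e, abs_mul]
    · rw [abs_sub_comm, abs_of_pos (sub_pos.2 hξ.2), abs_of_pos (sub_pos.2 h)]
      linarith [hξ.1]

lemma lam_pos : 0 < S.lam := one_pos.trans S.one_lt_lam

lemma SameItin.expand {n : ℕ} : ∀ {y z : ℝ}, S.SameItin n y z →
    S.lam ^ n * |y - z| ≤ |S.T^[n] y - S.T^[n] z| := by
  induction n with
  | zero => intro y z _; simp
  | succ n ih =>
    intro y z h
    by_cases hyz : y = z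
    · simp [hyz]
    obtain ⟨j, hy, hz⟩ := h 0 n.succ_pos
    obtain ⟨ξ, hξ, e, -⟩ := mvt_branch hy hz hyz
    have h1 := ih h.tail
    have h2 : S.lam * |y - z| ≤ |S.T y - S.T z| := by
      simp only [Function.iterate_zero, id] at e
      rw [e]
      exact mul_le_mul_of_nonneg_right (S.expanding ξ (mem_iUnion_of_mem hξ)) (abs_nonneg _)
    calc S.lam ^ (n + 1) * |y - z| = S.lam ^ n * (S.lam * |y - z|) := by ring
      _ ≤ S.lam ^ n * |S.T y - S.T z| :=
        mul_le_mul_of_nonneg_left h2 (pow_nonneg lam_pos.le n)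
      _ ≤ _ := by simpa only [Function.iterate_succ_apply] using h1

/-! ### Structure of basic sets -/

lemma branch_pairwise {i j : Fin S.k} {x : ℝ} (hi : x ∈ Icc (S.u i) (S.v i))
    (hj : x ∈ Icc (S.u j) (S.v j)) : i = j := by
  by_contra h
  exact Set.disjoint_left.1 (S.pair_disj h) hi hj

lemma subset_branch {C : Set ℝ} (hC : IsPreconnected C) (hsub : C ⊆ S.domain) {j : Fin S.k} {x : ℝ}
    (hx : x ∈ C) (hj : x ∈ Icc (S.u j) (S.v j)) : C ⊆ Icc (S.u j) (S.v j) := by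
  have hcl : IsClosed (⋃ i : {i : Fin S.k // i ≠ j}, Icc (S.u i) (S.v i)) :=
    isClosed_iUnion_of_finite fun _ => isClosed_Icc
  have hcover : C ⊆ Icc (S.u j) (S.v j) ∪
      ⋃ i : {i : Fin S.k // i ≠ j}, Icc (S.u i) (S.v i) := by
    intro y hy
    obtain ⟨i, hi⟩ := mem_iUnion.1 (hsub hy)
    by_cases hij : i = j
    · exact Or.inl (hij ▸ hi)
    · exact Or.inr (mem_iUnion.2 ⟨⟨i, hij⟩, hi⟩)
  have hdisj : C ∩ (Icc (S.u j) (S.v j) ∩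
      ⋃ i : {i : Fin S.k // i ≠ j}, Icc (S.u i) (S.v i)) = ∅ := by
    rw [eq_empty_iff_forall_notMem]
    rintro y ⟨-, hyj, hyi⟩
    obtain ⟨⟨i, hi⟩, hyi⟩ := mem_iUnion.1 hyi
    exact hi (branch_pairwise hyi hyj)
  rcases isPreconnected_iff_subset_of_disjoint_closed.1 hC _ _ isClosed_Icc hcl hcover hdisj
    with h | h
  · exact h
  · obtain ⟨⟨i, hi⟩, hxi⟩ := mem_iUnion.1 (h hx)
    exact absurd (branch_pairwise hxi hj) hi

/-- A branch pulls subintervals of `[0, 1]` back to intervals; orientation is hidden in `uIcc`. -/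
lemma mem_uIcc_branch {j : Fin S.k} {a b y : ℝ} (ha : a ∈ Icc (S.u j) (S.v j))
    (hb : b ∈ Icc (S.u j) (S.v j)) (hy : y ∈ Icc (S.u j) (S.v j)) :
    S.T y ∈ uIcc (S.T a) (S.T b) ↔ y ∈ uIcc a b := by
  rcases (continuousOn_branch j).strictMonoOn_of_injOn_Icc' (S.nondeg j).le (S.bijOn j).injOn
    with h | h
  · simp only [mem_uIcc, h.le_iff_le ha hy, h.le_iff_le hy hb, h.le_iff_le hb hy,
      h.le_iff_le hy ha]
  · simp only [mem_uIcc, h.le_iff_ge ha hy, h.le_iff_ge hy hb, h.le_iff_ge hb hy,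
      h.le_iff_ge hy ha]
    tauto

lemma mem_level_succ {n : ℕ} {x : ℝ} :
    x ∈ S.level (n + 1) ↔ x ∈ S.domain ∧ S.T x ∈ S.level n := by
  constructor
  · intro h
    refine ⟨h 0 n.succ_pos, fun m hm => ?_⟩
    simpa only [Function.iterate_succ_apply] using h (m + 1) (by omega)
  · rintro ⟨h0, h⟩ m hm
    cases m with
    | zero => exact h0
    | succ m => simpa only [Function.iterate_succ_apply] using h m (by omega)

lemma mem_unit_of_mem_domain {x : ℝ} (hx : x ∈ S.domain) : x ∈ Icc (0 : ℝ) 1 := by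
  obtain ⟨j, hj⟩ := mem_iUnion.1 hx
  exact S.subset_unit j hj

/-- Since `level 0` is all of `ℝ`, the level sets are cut down to `[0, 1]` so that the induction can
start at `n = 0`; for `n ≥ 1` this changes nothing. -/
lemma exists_component_eq_uIcc (n : ℕ) : ∀ x ∈ Icc (0 : ℝ) 1 ∩ S.level n, ∃ a b : ℝ,
    connectedComponentIn (Icc (0 : ℝ) 1 ∩ S.level n) x = uIcc a b ∧
      S.T^[n] a = 0 ∧ S.T^[n] b = 1 ∧ (∀ y ∈ uIcc a b, S.T^[n] y ∈ Icc (0 : ℝ) 1) ∧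
        ∀ y ∈ uIcc a b, ∀ z ∈ uIcc a b, S.SameItin n y z := by
  induction n with
  | zero =>
    intro x hx
    have h0 : Icc (0 : ℝ) 1 ∩ S.level 0 = Icc 0 1 := by
      ext; simp [level]
    rw [h0] at hx ⊢
    refine ⟨0, 1, ?_, rfl, rfl, ?_, ?_⟩
    · rw [isPreconnected_Icc.connectedComponentIn hx, uIcc_of_le zero_le_one]
    · intro y hy
      rwa [uIcc_of_le zero_le_one] at hy
    · intro y _ z _ m hm
      omega
  | succ n ih =>
    rintro x ⟨hx01, hx⟩
    obtain ⟨hxd, hTx⟩ := mem_level_succ.1 hx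
    obtain ⟨j, hxj⟩ := mem_iUnion.1 hxd
    have hTx' : S.T x ∈ Icc (0 : ℝ) 1 ∩ S.level n := ⟨(S.bijOn j).mapsTo hxj, hTx⟩
    obtain ⟨c, d, hC, hc, hd, hmap, hsame⟩ := ih (S.T x) hTx'
    have hsub : uIcc c d ⊆ Icc (0 : ℝ) 1 ∩ S.level n := hC ▸ connectedComponentIn_subset _ _
    obtain ⟨a, ha, rfl⟩ := (S.bijOn j).surjOn (hsub left_mem_uIcc).1
    obtain ⟨b, hb, rfl⟩ := (S.bijOn j).surjOn (hsub right_mem_uIcc).1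
    have hbr : uIcc a b ⊆ Icc (S.u j) (S.v j) := uIcc_subset_Icc ha hb
    have hT : ∀ y ∈ uIcc a b, S.T y ∈ uIcc (S.T a) (S.T b) := fun y hy =>
      (mem_uIcc_branch ha hb (hbr hy)).2 hy
    have hxab : x ∈ uIcc a b := by
      rw [← mem_uIcc_branch ha hb hxj, ← hC]
      exact mem_connectedComponentIn hTx'
    refine ⟨a, b, ?_, by simpa using hc, by simpa using hd, fun y hy => ?_, fun y hy z hz => ?_⟩
    · apply Subset.antisymm
      · have hpre : IsPreconnected
            (connectedComponentIn (Icc (0 : ℝ) 1 ∩ S.level (n + 1)) x) :=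
          isPreconnected_connectedComponentIn
        have hCs := connectedComponentIn_subset (Icc (0 : ℝ) 1 ∩ S.level (n + 1)) x
        have hxC : x ∈ connectedComponentIn (Icc (0 : ℝ) 1 ∩ S.level (n + 1)) x :=
          mem_connectedComponentIn ⟨hx01, hx⟩
        have hCj := subset_branch hpre (fun y hy => (mem_level_succ.1 (hCs hy).2).1) hxC hxj
        have himg := (hpre.image S.T ((continuousOn_branch j).mono hCj)).subset_connectedComponentIn
          (F := Icc (0 : ℝ) 1 ∩ S.level n) (mem_image_of_mem S.T hxC) (by
            rintro _ ⟨y, hy, rfl⟩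
            exact ⟨(S.bijOn j).mapsTo (hCj hy), (mem_level_succ.1 (hCs hy).2).2⟩)
        intro y hy
        rw [← mem_uIcc_branch ha hb (hCj hy), ← hC]
        exact himg (mem_image_of_mem S.T hy)
      · refine isPreconnected_uIcc.subset_connectedComponentIn hxab fun y hy => ?_
        exact ⟨S.subset_unit j (hbr hy),
          mem_level_succ.2 ⟨mem_iUnion_of_mem (hbr hy), (hsub (hT y hy)).2⟩⟩
    · simpa using hmap _ (hT y hy)
    · exact SameItin.cons (hbr hy) (hbr hz) (hsame _ (hT y hy) _ (hT z hz))

/-! ### Bounded distortion -/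

lemma abs_log_sub_log_le {s t : ℝ} (hs : 1 ≤ s) (ht : 1 ≤ t) :
    |Real.log s - Real.log t| ≤ |s - t| := by
  have key : ∀ p q : ℝ, 1 ≤ p → 1 ≤ q → Real.log p - Real.log q ≤ |p - q| := by
    intro p q hp hq
    have hp0 : 0 < p := by linarith
    have hq0 : 0 < q := by linarith
    rw [← Real.log_div hp0.ne' hq0.ne']
    calc Real.log (p / q) ≤ p / q - 1 := Real.log_le_sub_one_of_pos (by positivity)
      _ = (p - q) / q := by field_simp
      _ ≤ |p - q| / q := by gcongr; exact le_abs_self _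
      _ ≤ |p - q| := div_le_self (abs_nonneg _) hq
  rw [abs_le]
  refine ⟨?_, key s t hs ht⟩
  have := key t s ht hs
  rw [abs_sub_comm] at this
  linarith

lemma phi_holder {x y : ℝ} (hx : x ∈ ⋃ j, Icc (S.u j) (S.v j))
    (hy : y ∈ ⋃ j, Icc (S.u j) (S.v j)) :
    |S.phi x - S.phi y| ≤ S.Ceps * |x - y| ^ S.eps := by
  have h1 := S.one_lt_lam.le.trans (S.expanding x hx)
  have h2 := S.one_lt_lam.le.trans (S.expanding y hy)
  calc |S.phi x - S.phi y| = abs (Real.log |S.T' x| - Real.log |S.T' y|) := by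
        rw [phi, phi, ← abs_neg]; congr 1; ring
    _ ≤ abs (|S.T' x| - |S.T' y|) := abs_log_sub_log_le h1 h2
    _ ≤ |S.T' x - S.T' y| := abs_abs_sub_abs_le _ _
    _ ≤ _ := S.holder x hx y hy

lemma birkhoff_succ (f : ℝ → ℝ) (n : ℕ) (x : ℝ) :
    S.birkhoff f (n + 1) x = f x + S.birkhoff f n (S.T x) := by
  simp only [birkhoff, Finset.sum_range_succ', Function.iterate_succ_apply, Function.iterate_zero,
    id]
  ring

/-- If `a`, `b`, `x` have a common itinerary of length `n` and `T^n` spreads `a` and `b` to distance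
`1`, then `log |a - b|` agrees with `φⁿ(x)` up to a partial sum of a geometric series of ratio
`λ ^ (-ε)`. -/
lemma distortion (n : ℕ) : ∀ a b x : ℝ, S.SameItin n a b → S.SameItin n x a →
    |S.T^[n] a - S.T^[n] b| = 1 → |S.T^[n] x - S.T^[n] a| ≤ 1 →
    |Real.log |a - b| - S.birkhoff S.phi n x| ≤
      S.Ceps * 2 ^ S.eps * ∑ i ∈ Finset.range n, ((S.lam⁻¹) ^ S.eps) ^ (i + 1) := by
  induction n with
  | zero =>
    intro a b x _ _ h1 _
    simp only [Function.iterate_zero, id] at h1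
    simp [h1, birkhoff]
  | succ n ih =>
    intro a b x hab hxa h1 h2
    have hne : a ≠ b := by
      rintro rfl
      simp at h1
    have hTne : S.T a ≠ S.T b := by
      intro h
      simp [h] at h1
    obtain ⟨j, ha, hb⟩ := hab 0 n.succ_pos
    obtain ⟨i, hx, ha'⟩ := hxa 0 n.succ_pos
    simp only [Function.iterate_zero, id] at ha hb hx ha'
    obtain rfl := branch_pairwise ha ha'
    obtain ⟨ξ, hξ, e, hξa⟩ := mvt_branch ha hb hne
    have hIH := ih (S.T a) (S.T b) (S.T x) hab.tail hxa.tail h1 h2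
    have hpow : 0 < S.lam ^ (n + 1) := pow_pos lam_pos _
    have e1 := hab.expand
    have e2 := hxa.expand
    have hdist : |ξ - x| ≤ 2 * S.lam⁻¹ ^ (n + 1) := by
      have e1' : |a - b| ≤ S.lam⁻¹ ^ (n + 1) := by
        rw [inv_pow, ← one_div, le_div_iff₀ hpow]; linarith
      have e2' : |x - a| ≤ S.lam⁻¹ ^ (n + 1) := by
        rw [inv_pow, ← one_div, le_div_iff₀ hpow]; linarith
      have := abs_sub_le ξ a x
      rw [abs_sub_comm a x] at this
      linarith
    have hlog : Real.log |a - b| = Real.log |S.T a - S.T b| + S.phi ξ := by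
      have hT' : |S.T' ξ| ≠ 0 :=
        (lam_pos.trans_le (S.expanding ξ (mem_iUnion_of_mem hξ))).ne'
      rw [e, Real.log_mul hT' (abs_pos.2 (sub_ne_zero.2 hne)).ne', phi]
      ring
    have hphi : |S.phi ξ - S.phi x| ≤ S.Ceps * 2 ^ S.eps * ((S.lam⁻¹) ^ S.eps) ^ (n + 1) := by
      have hli : 0 ≤ S.lam⁻¹ := (inv_pos.2 lam_pos).le
      calc |S.phi ξ - S.phi x| ≤ S.Ceps * |ξ - x| ^ S.eps :=
            phi_holder (mem_iUnion_of_mem hξ) (mem_iUnion_of_mem hx)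
        _ ≤ S.Ceps * (2 * S.lam⁻¹ ^ (n + 1)) ^ S.eps :=
            mul_le_mul_of_nonneg_left
              (Real.rpow_le_rpow (abs_nonneg _) hdist S.eps_pos.le) S.Ceps_nonneg
        _ = _ := by
            rw [Real.mul_rpow zero_le_two (pow_nonneg hli _), Real.rpow_pow_comm hli, mul_assoc]
    rw [birkhoff_succ, hlog, Finset.sum_range_succ, mul_add]
    calc |Real.log |S.T a - S.T b| + S.phi ξ - (S.phi x + S.birkhoff S.phi n (S.T x))|
        = |(Real.log |S.T a - S.T b| - S.birkhoff S.phi n (S.T x)) + (S.phi ξ - S.phi x)| := by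
          congr 1; ring
      _ ≤ _ := (abs_add_le _ _).trans (add_le_add hIH hphi)

lemma setLen_uIcc (a b : ℝ) : setLen (uIcc a b) = |a - b| := by
  rw [setLen, uIcc, csSup_Icc inf_le_sup, csInf_Icc inf_le_sup, sup_sub_inf_eq_abs_sub,
    abs_sub_comm]

end CookieCutter

/-- Comparison of lengths of basic sets with Birkhoff sums of `φ = -log|T'|`:
there are constants `A, B > 0` with `A e^{φⁿ(x)} ≤ |I_n^i| ≤ B e^{φⁿ(x)}` for
every `n ≥ 1`, every `n`-th level basic set and every point `x` in it. -/
theorem basic_set_length_comparison (S : CookieCutter) :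
    ∃ A B : ℝ, 0 < A ∧ 0 < B ∧
      ∀ n, 1 ≤ n → ∀ I, S.IsBasic n I → ∀ x ∈ I,
        A * Real.exp (S.birkhoff S.phi n x) ≤ setLen I ∧
          setLen I ≤ B * Real.exp (S.birkhoff S.phi n x) := by
  set q : ℝ := (S.lam⁻¹) ^ S.eps with hq
  have hli : 0 < S.lam⁻¹ := inv_pos.2 CookieCutter.lam_pos
  have hq0 : 0 ≤ q := Real.rpow_nonneg hli.le _
  have hq1 : q < 1 := Real.rpow_lt_one hli.le (inv_lt_one_of_one_lt₀ S.one_lt_lam) S.eps_pos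
  have hsum : ∀ n, ∑ i ∈ Finset.range n, q ^ (i + 1) ≤ (1 - q)⁻¹ := by
    intro n
    calc ∑ i ∈ Finset.range n, q ^ (i + 1) ≤ ∑ i ∈ Finset.range n, q ^ i :=
          Finset.sum_le_sum fun i _ => pow_le_pow_of_le_one hq0 hq1.le i.le_succ
      _ ≤ ∑' i, q ^ i := (summable_geometric_of_lt_one hq0 hq1).sum_le_tsum _
          fun i _ => pow_nonneg hq0 i
      _ = (1 - q)⁻¹ := tsum_geometric_of_lt_one hq0 hq1
  set K : ℝ := S.Ceps * 2 ^ S.eps * (1 - q)⁻¹ with hK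
  refine ⟨Real.exp (-K), Real.exp K, Real.exp_pos _, Real.exp_pos _, ?_⟩
  rintro n hn I ⟨x₀, hx₀, rfl⟩ x hx
  have hlev : Icc (0 : ℝ) 1 ∩ S.level n = S.level n :=
    inter_eq_right.2 fun y hy => CookieCutter.mem_unit_of_mem_domain (hy 0 hn)
  obtain ⟨a, b, hC, ha, hb, hmap, hsame⟩ :=
    CookieCutter.exists_component_eq_uIcc n x₀ (hlev.symm ▸ hx₀)
  rw [hlev] at hC
  rw [hC] at hx ⊢
  rw [CookieCutter.setLen_uIcc]
  have hne : a ≠ b := by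
    rintro rfl
    exact zero_ne_one (ha.symm.trans hb)
  have hdis := (CookieCutter.distortion n a b x (hsame a left_mem_uIcc b right_mem_uIcc)
    (hsame x hx a left_mem_uIcc) (by simp [ha, hb]) (by
      rw [ha, sub_zero, abs_of_nonneg (hmap x hx).1]
      exact (hmap x hx).2)).trans (mul_le_mul_of_nonneg_left (hsum n)
        (mul_nonneg S.Ceps_nonneg (Real.rpow_nonneg zero_le_two _)))
  obtain ⟨h1, h2⟩ := abs_le.1 hdis
  have hpos : 0 < |a - b| := abs_pos.2 (sub_ne_zero.2 hne)
  rw [← Real.exp_add, ← Real.exp_add, ← Real.le_log_iff_exp_le hpos, ← Real.log_le_iff_le_exp hpos]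
  constructor <;> linarith
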